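/- For all n ≥ 3 and all natural numbers u, v, the number of π ∈ NC(n,3) with skew(π) = u and area(π) = v equals the number of parallelogram polyominoes P ∈ PP(n−2,3) with area(P) = u and bounce(P) = v. (The pair (skew, area) is a combinatorial interpretation of the q,t-Narayana polynomial N_{n,3}(q,t).) -/

import Mathlib

namespace QtN

/-! ### Lattice paths and parallelogram polyominoes -/

/-- A step of a lattice path: east or north. -/
inductive Step : Type
  | E : Step
  | N : Step
  deriving DecidableEq, Repr

/-- Number of east steps of a path. -/
def countE (w : List Step) : ℕ := w.count Step.E

/-- Number of north steps of a path. -/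
def countN (w : List Step) : ℕ := w.count Step.N

/-- Endpoint of a path started at the origin. -/
def pathPos (w : List Step) : ℕ × ℕ := (countE w, countN w)

/-- The set of lattice points visited by a path started at the origin. -/
def pathPts (w : List Step) : Finset (ℕ × ℕ) :=
  ((List.range (w.length + 1)).map (fun i => pathPos (w.take i))).toFinset

/-- `colHeightsAux w h`: for each east step of `w` (in order), the number of north
steps preceding it, starting with `h` north steps already performed. -/
def colHeightsAux : List Step → ℕ → List ℕ
  | [], _ => []
  | Step.E :: r, h => h :: colHeightsAux r h
  | Step.N :: r, h => colHeightsAux r (h + 1)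

/-- Height at which the path `w` crosses the vertical strip `i ≤ x ≤ i + 1`. -/
def colHeight (w : List Step) (i : ℕ) : ℕ := (colHeightsAux w 0).getD i 0

/-- A parallelogram polyomino of size `m × n`: a pair of monotone lattice paths from
`(0,0)` to `(m,n)` (east/north steps), the upper path staying weakly above the lower
path, and the two paths meeting only at `(0,0)` and `(m,n)`. -/
structure Polyomino (m n : ℕ) : Type where
  lower : List Step
  upper : List Step
  lowerE : countE lower = m
  lowerN : countN lower = n
  upperE : countE upper = m
  upperN : countN upper = n
  above : ∀ i < m, colHeight lower i ≤ colHeight upper i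
  meet : pathPts upper ∩ pathPts lower = {(0, 0), (m, n)}

/-- The area statistic: number of unit squares between the two paths,
minus `(m + n - 1)`. -/
def area {m n : ℕ} (P : Polyomino m n) : ℕ :=
  (∑ i ∈ Finset.range m, (colHeight P.upper i - colHeight P.lower i)) - (m + n - 1)

/-- Where an eastward run at height `y`, starting at `x`, first hits the lower path. -/
def eastTarget (hL : ℕ → ℕ) (m x y : ℕ) : ℕ :=
  ((List.range m).filter (fun i => decide (x ≤ i ∧ y ≤ hL i))).headD m

/-- Total bounce contribution: from state `(x, y)` just after the `j`-th east-to-north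
turn (counting the turns made so far), alternately go north until hitting the upper
path and east until hitting the lower path, each step contributing the number of
east-to-north turns preceding it. -/
def bounceAux (hU hL : ℕ → ℕ) (m n : ℕ) : ℕ → ℕ → ℕ → ℕ → ℕ
  | 0, _, _, _ => 0
  | fuel + 1, x, y, j =>
    if x = m ∧ y = n then 0
    else
      let y' := hU (x - 1)
      let x' := if y' = n then m else eastTarget hL m x y'
      (j + 1) * ((y' - y) + (x' - x)) + bounceAux hU hL m n fuel x' y' (j + 1)

/-- The bounce statistic of a parallelogram polyomino: the bounce path starts with a
single east step (contributing `0`) and then alternates north runs (to the ceiling)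
and east runs (to the floor); each step contributes the number of east-to-north turns
preceding it; finally `(m + n - 1)` is subtracted. -/
def bounce {m n : ℕ} (P : Polyomino m n) : ℕ :=
  bounceAux (colHeight P.upper) (colHeight P.lower) m n (m + n + 2) 1 0 0 - (m + n - 1)

/-! ### Set partitions and noncrossing partitions -/

/-- Maximum of a finite set of naturals (`0` for the empty set). -/
def fmax (β : Finset ℕ) : ℕ := β.sup id

/-- Minimum of a finite set of naturals (`0` for the empty set). -/
def fmin (β : Finset ℕ) : ℕ := if h : β.Nonempty then β.min' h else 0

/-- A set partition of `{1, …, n}`, given by its finite set of blocks. -/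
structure SetPartition (n : ℕ) : Type where
  blocks : Finset (Finset ℕ)
  not_empty_mem : ∅ ∉ blocks
  cover : ∀ i : ℕ, i ∈ Finset.Icc 1 n ↔ ∃ β ∈ blocks, i ∈ β
  disjoint : ∀ β ∈ blocks, ∀ γ ∈ blocks, β ≠ γ → Disjoint β γ

/-- A family of blocks is noncrossing if there are no `a < b < c < d` with
`a, c` in one block and `b, d` in a different block. -/
def IsNoncrossing (bs : Finset (Finset ℕ)) : Prop :=
  ∀ a b c d : ℕ, a < b → b < c → c < d →
    ∀ β ∈ bs, ∀ γ ∈ bs, a ∈ β → c ∈ β → b ∈ γ → d ∈ γ → β = γ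

/-- `NC n k`: noncrossing partitions of `{1, …, n}` with exactly `n - k + 1` blocks. -/
abbrev NC (n k : ℕ) : Type :=
  {P : SetPartition n // IsNoncrossing P.blocks ∧ P.blocks.card = n - k + 1}

/-- The skip statistic: `∑_{β} (max β - min β - |β| + 1)`. -/
def skip (bs : Finset (Finset ℕ)) : ℕ :=
  ∑ β ∈ bs, ((fmax β + 1 - fmin β) - β.card)

/-- The non-singleton blocks of a partition. -/
def nsBlocks (bs : Finset (Finset ℕ)) : Finset (Finset ℕ) :=
  bs.filter (fun β => 2 ≤ β.card)

/-- The block of `bs` containing `x` (junk if there is not exactly one). -/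
def blockContaining (bs : Finset (Finset ℕ)) (x : ℕ) : Finset ℕ :=
  (bs.filter (fun β => x ∈ β)).sup id

/-- For a noncrossing partition in `NC n 3`, the quadruple `(a, b, c, d)` describing its
non-singleton blocks: for two pair blocks `{a,b}` and `{c,d}` (with `a` the global
minimum) this is `(a, b, c, d)`; for a single triple block `{a, b, c}` (`a < b < c`)
this is `(a, b, b, c)`. -/
def blockQuad (bs : Finset (Finset ℕ)) : ℕ × ℕ × ℕ × ℕ :=
  let A := blockContaining (nsBlocks bs) (fmin ((nsBlocks bs).sup id))
  if (nsBlocks bs).card = 1 then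
    let l := A.sort (· ≤ ·)
    (l.getD 0 0, l.getD 1 0, l.getD 1 0, l.getD 2 0)
  else
    let B := ((nsBlocks bs).erase A).sup id
    (fmin A, fmax A, fmin B, fmax B)

/-- The leap statistic on `NC n 3`: `leap(ab|cd) = c - 2 + max(0, c - b)`,
and `leap({a,b,c}) = b - 2` (the case `b = c`). -/
def leap (bs : Finset (Finset ℕ)) : ℕ :=
  let (_, b, c, _) := blockQuad bs
  (c - 2) + (c - b)

/-- The skew statistic on `NC n 3`: `skew(ab|cd) = c - 2 + a` if `b < c`, else `c - 2`;
`skew({a,b,c}) = b - 2` (the case `b = c`). -/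
def skew (bs : Finset (Finset ℕ)) : ℕ :=
  let (a, b, c, _) := blockQuad bs
  if b < c then c - 2 + a else c - 2

/-- The mag statistic on `NC n 3`: `mag(ab|cd) = a + max(b, c) - 2 - ⌈(b - a)/2⌉`,
and `mag({a,b,c}) = a + b - 2 - ⌈(b - a)/2⌉` (the case `b = c`). -/
def mag (bs : Finset (Finset ℕ)) : ℕ :=
  let (a, b, c, _) := blockQuad bs
  a + max b c - 2 - (b - a + 1) / 2

/-- The area statistic on noncrossing partitions:
`area(π) = ∑_{β, β' ∈ π} #{ i ∈ β' : i < max β < max β' }` (ordered pairs of blocks). -/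
def ncArea (bs : Finset (Finset ℕ)) : ℕ :=
  ∑ β ∈ bs, ∑ γ ∈ bs, (γ.filter (fun i => i < fmax β ∧ fmax β < fmax γ)).card

/-- The elements of the non-singleton blocks, listed in increasing order, with
the middle element of a size-3 block listed twice. -/
def nsList (bs : Finset (Finset ℕ)) : List ℕ :=
  let l := ((nsBlocks bs).sup id).sort (· ≤ ·)
  if l.length = 3 then [l.getD 0 0, l.getD 1 0, l.getD 1 0, l.getD 2 0] else l

/-- The multiset of block sizes of a partition. -/
def blockSizes (bs : Finset (Finset ℕ)) : Multiset ℕ := bs.val.map Finset.card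

/-- The image of a partition of `{1, …, n}` under the flip `i ↦ n + 1 - i`. -/
def flipBlocks (n : ℕ) (bs : Finset (Finset ℕ)) : Finset (Finset ℕ) :=
  bs.image (fun β => β.image (fun i => n + 1 - i))

/-! ### The mingarc statistic -/

/-- The gaps `ν_r = m_{r+1} - m_r - 1` between consecutive block minima
`m_1 < ⋯ < m_h` (with `m_{h+1} = n + 1`). -/
def nuList (n : ℕ) (bs : Finset (Finset ℕ)) : List ℕ :=
  let ms := ((bs.image fmin).sort (· ≤ ·)) ++ [n + 1]
  (List.range (bs.image fmin).card).map (fun r => ms.getD (r + 1) 0 - ms.getD r 0 - 1)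

/-- Concatenation of `replicate ν c` over a list of pairs `(c, ν)`. -/
def repeatEach : List (ℕ × ℕ) → List ℕ
  | [] => []
  | p :: r => List.replicate p.2 p.1 ++ repeatEach r

/-- The right endpoints `y_1 ≤ ⋯ ≤ y_{k-1}`: each block maximum `c_r` repeated
`ν_r` times, in increasing order. -/
def ysList (n : ℕ) (bs : Finset (Finset ℕ)) : List ℕ :=
  repeatEach (List.zip ((bs.image fmax).sort (· ≤ ·)) (nuList n bs))

/-- The left endpoints `x_1 < ⋯ < x_{k-1}`: the elements of `{1, …, n}` that are not
block maxima, in increasing order. -/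
def xsList (n : ℕ) (bs : Finset (Finset ℕ)) : List ℕ :=
  ((Finset.Icc 1 n).filter (fun i => i ∉ bs.image fmax)).sort (· ≤ ·)

/-- Greedy left-to-right selection of arcs: keep the first arc, and thereafter keep the
earliest arc whose left endpoint exceeds the right endpoint of the last kept arc. -/
def greedyArcs : List (ℕ × ℕ) → Option ℕ → List (ℕ × ℕ)
  | [], _ => []
  | a :: rest, none => a :: greedyArcs rest (some a.2)
  | a :: rest, some r =>
      if r < a.1 then a :: greedyArcs rest (some a.2) else greedyArcs rest (some r)

/-- The mingarc statistic: the sum of `n - y_i` over the greedily selected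
candidate arcs `[x_i, y_i]`. -/
def mingarc (n : ℕ) (bs : Finset (Finset ℕ)) : ℕ :=
  ((greedyArcs (List.zip (xsList n bs) (ysList n bs)) none).map (fun p => n - p.2)).sum

/-! ### The map η from polyominoes to noncrossing partitions -/

/-- Largest column index `i < m` with `colHeight lower i ≤ j`: the rightmost cell
adjacent to the floor in row `j`. -/
def eFloor {m k : ℕ} (P : Polyomino m k) (j : ℕ) : ℕ :=
  (((List.range m).filter (fun i => decide (colHeight P.lower i ≤ j))).getLastD 0)

/-- Smallest column index `i` with `colHeight upper i ≥ j + 1`: the leftmost cell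
adjacent to the ceiling in row `j` (with default `m - 1`). -/
def fCeil {m k : ℕ} (P : Polyomino m k) (j : ℕ) : ℕ :=
  (((List.range m).filter (fun i => decide (j + 1 ≤ colHeight P.upper i))).headD (m - 1))

/-- The number of cells adjacent to the ceiling in row `j`. -/
def rowCount {m k : ℕ} (P : Polyomino m k) (j : ℕ) : ℕ :=
  fCeil P (j + 1) - fCeil P j + 1

/-- Pick, `cnt` times, the largest label in `{1, …, L}` not used yet. -/
def pickRow : ℕ → ℕ → Finset ℕ → Finset ℕ
  | 0, _, _ => ∅
  | cnt + 1, L, used =>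
      let x := fmax ((Finset.Icc 1 L) \ used)
      insert x (pickRow cnt L (insert x used))

/-- The blocks of `η(P)`: label the cells adjacent to the floor `1, …, n` going bottom
to top, left to right (the label of the floor cell in column `i`, row `j` is
`i + j + 1`, and the labels present in rows `≤ j` are exactly `1, …, eFloor P j + j + 1`);
then going bottom to top, left to right over the cells adjacent to the ceiling, assign
to each the largest unused indexing label occurring in the same row or below; the
blocks are the label sets of the ceiling rows. -/
def etaBlocks {m k : ℕ} (P : Polyomino m k) : Finset (Finset ℕ) :=
  (((List.range k).foldl
      (fun st j =>
        let B := pickRow (rowCount P j) (eFloor P j + j + 1) st.1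
        (st.1 ∪ B, B :: st.2))
      ((∅ : Finset ℕ), ([] : List (Finset ℕ)))).2).toFinset



set_option linter.unusedSimpArgs false
set_option linter.unusedVariables false

/-! ### Arithmetic bijection -/

def PPv (m : ℕ) (x : ℕ × ℕ × ℕ × ℕ) : Prop :=
  x.1 ≤ x.2.1 ∧ x.2.1 < x.2.2.2 ∧ x.1 < x.2.2.1 ∧ x.2.2.1 ≤ x.2.2.2 ∧ x.2.2.2 ≤ m

def PPa (x : ℕ × ℕ × ℕ × ℕ) : ℕ := x.2.2.1 + x.2.2.2 - x.1 - x.2.1 - 2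

def PPb (m : ℕ) (x : ℕ × ℕ × ℕ × ℕ) : ℕ :=
  if x.1 = 0 then (if x.2.1 = 0 then 0 else m + 1 - x.2.2.2)
  else if x.2.1 < x.2.2.1 then m + 2 - x.2.2.1 else 2 * m + 3 - x.2.2.1 - x.2.2.2

def NCv (n : ℕ) (x : ℕ × ℕ × ℕ × ℕ) : Prop :=
  1 ≤ x.1 ∧ x.1 < x.2.1 ∧ x.1 < x.2.2.1 ∧ x.2.2.1 < x.2.2.2 ∧ x.2.2.2 ≤ n ∧ x.2.1 ≤ n ∧
    (x.2.1 ≤ x.2.2.1 ∨ x.2.2.2 < x.2.1)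

def NCs (x : ℕ × ℕ × ℕ × ℕ) : ℕ :=
  if x.2.1 < x.2.2.1 then x.2.2.1 - 2 + x.1 else x.2.2.1 - 2

def NCa (x : ℕ × ℕ × ℕ × ℕ) : ℕ :=
  if x.2.1 < x.2.2.1 then x.2.1 - x.1 + x.2.2.2 - x.2.2.1 - 2
  else if x.2.1 = x.2.2.1 then 2 * x.2.2.2 - x.1 - x.2.1 - 3
  else x.2.1 - x.1 + x.2.2.2 - x.2.2.1 - 3


/-- middle model: `(f,g,h,i,j)` -/
def Wv (m u v : ℕ) (x : ℕ × ℕ × ℕ × ℕ × ℕ) : Prop :=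
  x.1 + x.2.1 + x.2.2.1 + x.2.2.2.1 + x.2.2.2.2 + 1 ≤ m ∧ (x.2.2.2.1 = 0 ∨ x.2.2.2.2 = 0) ∧
  x.1 + x.2.2.1 + 2 * x.2.2.2.2 = u ∧ x.2.1 + x.2.2.1 + 2 * x.2.2.2.1 = v

def ncToW : ℕ × ℕ × ℕ × ℕ → ℕ × ℕ × ℕ × ℕ × ℕ
  | (a, b, c, d) =>
    if b = c then (a - 1, 0, b - a - 1, d - b - 1, 0)
    else if b < c then (c - b - 1, d - c - 1, b - a - 1, 0, a)
    else (a - 1, b - d, c - a - 1, d - c - 1, 0)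

def wToNc : ℕ × ℕ × ℕ × ℕ × ℕ → ℕ × ℕ × ℕ × ℕ
  | (f, g, h, i, j) =>
    if j = 0 then
      if g = 0 then (f + 1, f + h + 2, f + h + 2, f + h + i + 3)
      else (f + 1, f + h + i + 3 + g, f + h + 2, f + h + i + 3)
    else (j, j + h + 1, j + h + f + 2, j + h + f + g + 3)

def ppToW (m : ℕ) : ℕ × ℕ × ℕ × ℕ → ℕ × ℕ × ℕ × ℕ × ℕ
  | (r, s, p, q) =>
    if r = 0 then
      if s = 0 then (q - p, 0, 0, 0, p - 1)
      else if p + s ≤ q then (q - s - p, m - q + 1, 0, 0, p - 1)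
      else (p + s - q - 1, m - q, 1, 0, q - s - 1)
    else if s < p then
      if s + 1 = p then (s - r, m - q, q - p, 1, 0)
      else (s - r, m - q, q - p + 2, 0, p - s - 2)
    else (p - r - 1, s - p, q - s - 1, m - q + 2, 0)

def wToPp (m : ℕ) : ℕ × ℕ × ℕ × ℕ × ℕ → ℕ × ℕ × ℕ × ℕ
  | (f, g, h, i, j) =>
    if 2 ≤ i then
      (m + 2 - i - h - 1 - g - f - 1, m + 2 - i - h - 1, m + 2 - i - h - 1 - g, m + 2 - i)
    else if i = 1 then (m - g - h - 1 - f, m - g - h - 1, m - g - h, m - g)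
    else if 2 ≤ h then
      (m - g - h + 2 - j - 2 - f, m - g - h + 2 - j - 2, m - g - h + 2, m - g)
    else if h = 1 then (0, m - g - j - 1, j + f + 2, m - g)
    else if g = 0 then (0, 0, j + 1, j + 1 + f)
    else (0, m + 1 - g - f - j - 1, j + 1, m + 1 - g)

theorem nc_to_w (m u v : ℕ) (x : ℕ × ℕ × ℕ × ℕ) (hx : NCv (m + 2) x ∧ NCs x = u ∧ NCa x = v) :
    Wv m u v (ncToW x) := by
  obtain ⟨a, b, c, d⟩ := x
  simp only [NCv, NCs, NCa, Wv, ncToW] at *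
  split_ifs at * <;> simp only [true_or, or_true, true_and, and_true] at * <;> omega

theorem w_to_nc (m u v : ℕ) (y : ℕ × ℕ × ℕ × ℕ × ℕ) (hy : Wv m u v y) :
    NCv (m + 2) (wToNc y) ∧ NCs (wToNc y) = u ∧ NCa (wToNc y) = v := by
  obtain ⟨f, g, h, i, j⟩ := y
  simp only [Wv, wToNc] at *
  split_ifs <;> refine ⟨?_, ?_, ?_⟩ <;> simp only [NCv, NCs, NCa] <;> (try split_ifs) <;> omega

theorem nc_w_nc (m u v : ℕ) (x : ℕ × ℕ × ℕ × ℕ) (hx : NCv (m + 2) x) : wToNc (ncToW x) = x := by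
  obtain ⟨a, b, c, d⟩ := x
  simp only [NCv, ncToW] at *
  split_ifs <;> simp only [wToNc] <;> split_ifs <;> (try contradiction) <;> simp only [Prod.mk.injEq, true_and, and_true] <;> omega

theorem w_nc_w (m u v : ℕ) (y : ℕ × ℕ × ℕ × ℕ × ℕ) (hy : Wv m u v y) : ncToW (wToNc y) = y := by
  obtain ⟨f, g, h, i, j⟩ := y
  simp only [Wv, wToNc] at *
  split_ifs <;> simp only [ncToW] <;> split_ifs <;> (try contradiction) <;> simp only [Prod.mk.injEq, true_and, and_true] <;> omega

theorem card_nc_w (m u v : ℕ) :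
    Nat.card {x // NCv (m + 2) x ∧ NCs x = u ∧ NCa x = v} = Nat.card {x // Wv m u v x} :=
  Nat.card_congr ⟨fun x => ⟨ncToW x.1, nc_to_w m u v x.1 x.2⟩,
    fun y => ⟨wToNc y.1, w_to_nc m u v y.1 y.2⟩,
    fun x => Subtype.ext (nc_w_nc m u v x.1 x.2.1), fun y => Subtype.ext (w_nc_w m u v y.1 y.2)⟩

theorem pp_to_w (m u v : ℕ) (x : ℕ × ℕ × ℕ × ℕ) (hx : PPv m x ∧ PPa x = u ∧ PPb m x = v) :
    Wv m u v (ppToW m x) := by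
  obtain ⟨a, b, c, d⟩ := x
  simp only [PPv, PPa, PPb, Wv, ppToW] at *
  split_ifs at * <;> simp only [true_or, or_true, true_and, and_true] at * <;> omega

theorem w_to_pp (m u v : ℕ) (y : ℕ × ℕ × ℕ × ℕ × ℕ) (hy : Wv m u v y) :
    PPv m (wToPp m y) ∧ PPa (wToPp m y) = u ∧ PPb m (wToPp m y) = v := by
  obtain ⟨f, g, h, i, j⟩ := y
  simp only [Wv, wToPp] at *
  split_ifs <;> refine ⟨?_, ?_, ?_⟩ <;> simp only [PPv, PPa, PPb] <;> (try split_ifs) <;> omega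

theorem pp_w_pp (m u v : ℕ) (x : ℕ × ℕ × ℕ × ℕ) (hx : PPv m x) : wToPp m (ppToW m x) = x := by
  obtain ⟨a, b, c, d⟩ := x
  simp only [PPv, ppToW] at *
  split_ifs <;> simp only [wToPp] <;> split_ifs <;> (try contradiction) <;> simp only [Prod.mk.injEq, true_and, and_true] <;> omega

theorem w_pp_w (m u v : ℕ) (y : ℕ × ℕ × ℕ × ℕ × ℕ) (hy : Wv m u v y) : ppToW m (wToPp m y) = y := by
  obtain ⟨f, g, h, i, j⟩ := y
  simp only [Wv, wToPp] at *
  split_ifs <;> simp only [ppToW] <;> split_ifs <;> (try contradiction) <;> simp only [Prod.mk.injEq, true_and, and_true] <;> omega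

theorem card_pp_w (m u v : ℕ) :
    Nat.card {x // PPv m x ∧ PPa x = u ∧ PPb m x = v} = Nat.card {x // Wv m u v x} :=
  Nat.card_congr ⟨fun x => ⟨ppToW m x.1, pp_to_w m u v x.1 x.2⟩,
    fun y => ⟨wToPp m y.1, w_to_pp m u v y.1 y.2⟩,
    fun x => Subtype.ext (pp_w_pp m u v x.1 x.2.1), fun y => Subtype.ext (w_pp_w m u v y.1 y.2)⟩



/-! ### Polyominoes of height three -/

open List in
def wd (m p q t : ℕ) : List Step :=
  replicate p Step.E ++ Step.N :: (replicate (q - p) Step.E ++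
    Step.N :: (replicate (t - q) Step.E ++ Step.N :: (replicate (m - t) Step.E ++ [])))

theorem colHeightsAux_rep (a : ℕ) (w : List Step) (h : ℕ) :
    colHeightsAux (List.replicate a Step.E ++ w) h = List.replicate a h ++ colHeightsAux w h := by
  induction a with
  | zero => simp
  | succ a ih => simp [List.replicate_succ, colHeightsAux, ih]

theorem colHeight_wd {m p q t : ℕ} (h1 : p ≤ q) (h2 : q ≤ t) (h3 : t ≤ m) {i : ℕ} (hi : i < m) :
    colHeight (wd m p q t) i =
      (if p ≤ i then 1 else 0) + (if q ≤ i then 1 else 0) + (if t ≤ i then 1 else 0) := by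
  simp only [colHeight, wd, colHeightsAux_rep, colHeightsAux]
  simp only [List.getD_eq_getElem?_getD, List.getElem?_append, List.length_replicate,
    List.getElem?_replicate]
  split_ifs <;> (try simp) <;> omega

theorem pathPts_nil : pathPts [] = {(0, 0)} := by decide

theorem mem_pathPts (w : List Step) (z : ℕ × ℕ) :
    z ∈ pathPts w ↔ ∃ i ≤ w.length, pathPos (w.take i) = z := by
  simp [pathPts, Nat.lt_succ_iff]

theorem mem_pathPts_N (w : List Step) (x y : ℕ) :
    (x, y) ∈ pathPts (Step.N :: w) ↔ (x = 0 ∧ y = 0) ∨ (1 ≤ y ∧ (x, y - 1) ∈ pathPts w) := by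
  simp only [mem_pathPts]
  constructor
  · rintro ⟨i, hi, h⟩
    cases i with
    | zero => simp [pathPos, countE, countN] at h; omega
    | succ i =>
      simp [pathPos, countE, countN] at h hi
      refine Or.inr ⟨by omega, i, hi, ?_⟩
      simp [pathPos, countE, countN]; omega
  · rintro (⟨rfl, rfl⟩ | ⟨hy, i, hi, h⟩)
    · exact ⟨0, by simp, by simp [pathPos, countE, countN]⟩
    · refine ⟨i + 1, by simpa using hi, ?_⟩
      simp [pathPos, countE, countN] at h ⊢; omega

theorem mem_pathPts_E (w : List Step) (x y : ℕ) :
    (x, y) ∈ pathPts (Step.E :: w) ↔ (x = 0 ∧ y = 0) ∨ (1 ≤ x ∧ (x - 1, y) ∈ pathPts w) := by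
  simp only [mem_pathPts]
  constructor
  · rintro ⟨i, hi, h⟩
    cases i with
    | zero => simp [pathPos, countE, countN] at h; omega
    | succ i =>
      simp [pathPos, countE, countN] at h hi
      refine Or.inr ⟨by omega, i, hi, ?_⟩
      simp [pathPos, countE, countN]; omega
  · rintro (⟨rfl, rfl⟩ | ⟨hy, i, hi, h⟩)
    · exact ⟨0, by simp, by simp [pathPos, countE, countN]⟩
    · refine ⟨i + 1, by simpa using hi, ?_⟩
      simp [pathPos, countE, countN] at h ⊢; omega

theorem mem_pathPts_rep (a : ℕ) (w : List Step) (x y : ℕ) :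
    (x, y) ∈ pathPts (List.replicate a Step.E ++ w) ↔
      (y = 0 ∧ x < a) ∨ (a ≤ x ∧ (x - a, y) ∈ pathPts w) := by
  induction a generalizing x with
  | zero => simp
  | succ a ih =>
    rw [List.replicate_succ, List.cons_append, mem_pathPts_E, ih, Nat.sub_sub, Nat.add_comm 1 a]
    generalize ((x - (a + 1), y) ∈ pathPts w) = R
    by_cases hR : R <;> simp only [hR, and_true, and_false, or_false] <;> omega

theorem mem_pathPts_wd {m p q t : ℕ} (h1 : p ≤ q) (h2 : q ≤ t) (h3 : t ≤ m) (x y : ℕ) :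
    (x, y) ∈ pathPts (wd m p q t) ↔ (y = 0 ∧ x ≤ p) ∨ (y = 1 ∧ p ≤ x ∧ x ≤ q) ∨
      (y = 2 ∧ q ≤ x ∧ x ≤ t) ∨ (y = 3 ∧ t ≤ x ∧ x ≤ m) := by
  simp only [wd, mem_pathPts_rep, mem_pathPts_N, pathPts_nil, Finset.mem_singleton, Prod.mk.injEq]
  omega

theorem exists_rep (w : List Step) (k : ℕ) (h : countN w = k + 1) :
    ∃ a w', w = List.replicate a Step.E ++ Step.N :: w' ∧ countN w' = k ∧
      countE w = a + countE w' := by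
  induction w with
  | nil => simp [countN] at h
  | cons s w ih =>
    cases s with
    | N => exact ⟨0, w, by simp, by simpa [countN] using h, by simp [countE]⟩
    | E =>
      obtain ⟨a, w', h1, h2, h3⟩ := ih (by simpa [countN] using h)
      refine ⟨a + 1, w', by rw [h1]; simp [List.replicate_succ], h2, ?_⟩
      simp [countE] at h3 ⊢; omega

theorem eq_rep (w : List Step) (h : countN w = 0) : w = List.replicate (countE w) Step.E := by
  induction w with
  | nil => simp [countE]
  | cons s w ih =>
    cases s with
    | N => simp [countN] at h
    | E =>
      have := ih (by simpa [countN] using h)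
      simp [countE] at this ⊢
      rw [List.replicate_succ]
      rw [← this]

theorem exists_wd (m : ℕ) (w : List Step) (hE : countE w = m) (hN : countN w = 3) :
    ∃ p q t, p ≤ q ∧ q ≤ t ∧ t ≤ m ∧ w = wd m p q t := by
  obtain ⟨a, w1, rfl, h1, e1⟩ := exists_rep w 2 hN
  obtain ⟨b, w2, rfl, h2, e2⟩ := exists_rep w1 1 h1
  obtain ⟨c, w3, rfl, h3, e3⟩ := exists_rep w2 0 h2
  have h4 := eq_rep w3 h3
  refine ⟨a, a + b, a + b + c, by omega, by omega, by omega, ?_⟩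
  have : m - (a + b + c) = countE w3 := by omega
  simp only [wd, this, ← h4, List.append_nil, Nat.add_sub_cancel_left]

theorem rep_inj (a b : ℕ) (w w' : List Step)
    (h : List.replicate a Step.E ++ Step.N :: w = List.replicate b Step.E ++ Step.N :: w') :
    a = b ∧ w = w' := by
  induction a generalizing b with
  | zero => cases b with
    | zero => simpa using h
    | succ b => simp [List.replicate_succ] at h
  | succ a ih => cases b with
    | zero => simp [List.replicate_succ] at h
    | succ b =>
      simp only [List.replicate_succ, List.cons_append, List.cons.injEq, true_and] at h
      have := ih b h
      exact ⟨by omega, this.2⟩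

theorem wd_inj {m p q t p' q' t' : ℕ} (h1 : p ≤ q) (h2 : q ≤ t) (h1' : p' ≤ q') (h2' : q' ≤ t')
    (h : wd m p q t = wd m p' q' t') : p = p' ∧ q = q' ∧ t = t' := by
  obtain ⟨e1, h⟩ := rep_inj _ _ _ _ h
  obtain ⟨e2, h⟩ := rep_inj _ _ _ _ h
  obtain ⟨e3, h⟩ := rep_inj _ _ _ _ h
  omega

theorem countE_wd {m p q t : ℕ} (h1 : p ≤ q) (h2 : q ≤ t) (h3 : t ≤ m) :
    countE (wd m p q t) = m := by
  simp [countE, wd, List.count_replicate]; omega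

theorem countN_wd (m p q t : ℕ) : countN (wd m p q t) = 3 := by
  simp [countN, wd, List.count_replicate]

def mkP {m r s p q : ℕ} (h : PPv m (r, s, p, q)) : Polyomino m 3 where
  lower := wd m p q m
  upper := wd m 0 r s
  lowerE := by simp only [PPv] at h; apply countE_wd <;> omega
  lowerN := countN_wd _ _ _ _
  upperE := by simp only [PPv] at h; apply countE_wd <;> omega
  upperN := countN_wd _ _ _ _
  above := by
    simp only [PPv] at h
    intro i hi
    rw [colHeight_wd (by omega) (by omega) (by omega) hi,
      colHeight_wd (by omega) (by omega) (by omega) hi]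
    split_ifs <;> omega
  meet := by
    simp only [PPv] at h
    ext ⟨x, y⟩
    rw [Finset.mem_inter, mem_pathPts_wd (by omega) (by omega) (by omega),
      mem_pathPts_wd (by omega) (by omega) (by omega)]
    simp only [Finset.mem_insert, Finset.mem_singleton, Prod.mk.injEq]
    omega

theorem exists_mkP {m : ℕ} (hm : 1 ≤ m) (P : Polyomino m 3) :
    ∃ (r s p q : ℕ) (h : PPv m (r, s, p, q)), mkP h = P := by
  obtain ⟨L, U, lE, lN, uE, uN, ab, mt⟩ := P
  obtain ⟨p, q, t, h1, h2, h3, rfl⟩ := exists_wd m L lE lN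
  obtain ⟨z, r, s, g1, g2, g3, rfl⟩ := exists_wd m U uE uN
  have key : ∀ x y, _ := fun x y => Finset.ext_iff.1 mt (x, y)
  simp only [Finset.mem_inter, mem_pathPts_wd h1 h2 h3, mem_pathPts_wd g1 g2 g3,
    Finset.mem_insert, Finset.mem_singleton, Prod.mk.injEq] at key
  have a0 := ab 0 (by omega)
  rw [colHeight_wd h1 h2 h3 (by omega), colHeight_wd g1 g2 g3 (by omega)] at a0
  have hp : p ≠ 0 := by
    rintro rfl
    have := key 0 1
    have : z = 0 := by
      by_contra hz
      split_ifs at a0 <;> omega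
    omega
  have hz : z = 0 := by
    have := key 1 0
    omega
  subst hz
  have e1 : r < p := by
    have := key p 1
    omega
  have e2 : s < q := by
    by_contra hs
    have := key q 2
    omega
  have e3 : t = m := by
    have := key t 3
    have := key s 3
    have := key (m - 1) 3
    omega
  subst e3
  exact ⟨r, s, p, q, ⟨g2, e2, e1, h1, h2⟩, rfl⟩

theorem sum_ind (m a b : ℕ) (hb : b ≤ m) :
    ∑ i ∈ Finset.range m, (if a ≤ i ∧ i < b then 1 else 0) = b - a := by
  rw [← Finset.card_filter]
  have : (Finset.range m).filter (fun i => a ≤ i ∧ i < b) = Finset.Ico a b := by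
    ext i; simp; omega
  rw [this, Nat.card_Ico]

theorem area_mkP {m r s p q : ℕ} (h : PPv m (r, s, p, q)) : area (mkP h) = PPa (r, s, p, q) := by
  have h' := h
  simp only [PPv] at h'
  simp only [area, mkP, PPa]
  have : ∑ i ∈ Finset.range m, (colHeight (wd m 0 r s) i - colHeight (wd m p q m) i) =
      ∑ i ∈ Finset.range m, ((if 0 ≤ i ∧ i < p then 1 else 0) + (if r ≤ i ∧ i < q then 1 else 0) +
        (if s ≤ i ∧ i < m then 1 else 0)) := by
    refine Finset.sum_congr rfl fun i hi => ?_
    have hi := Finset.mem_range.1 hi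
    rw [colHeight_wd (by omega) (by omega) (by omega) hi,
      colHeight_wd (by omega) (by omega) (by omega) hi]
    split_ifs <;> omega
  rw [this, Finset.sum_add_distrib, Finset.sum_add_distrib, sum_ind _ _ _ (by omega),
    sum_ind _ _ _ (by omega), sum_ind _ _ _ (by omega)]
  omega

theorem eastTarget_eq (hL : ℕ → ℕ) (m x y z : ℕ) (hz : z ≤ m)
    (H : ∀ i < m, (x ≤ i ∧ y ≤ hL i) ↔ z ≤ i) : eastTarget hL m x y = z := by
  unfold eastTarget
  have e : (List.range m).filter (fun i => decide (x ≤ i ∧ y ≤ hL i)) =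
      (List.range m).filter (fun i => decide (z ≤ i)) := by
    apply List.filter_congr
    intro i hi
    have := H i (List.mem_range.1 hi)
    simp only [this]
  rw [e]
  obtain ⟨k, rfl⟩ := Nat.exists_eq_add_of_le hz
  rw [List.range_add, List.filter_append]
  have e1 : (List.range z).filter (fun i => decide (z ≤ i)) = [] := by
    simp
  have e2 : (List.map (z + ·) (List.range k)).filter (fun i => decide (z ≤ i)) =
      List.map (z + ·) (List.range k) := by
    simp
  rw [e1, e2]
  cases k with
  | zero => simp
  | succ k => simp [List.range_succ_eq_map]

theorem bounceAux_succ (hU hL : ℕ → ℕ) (m n f x y j y' x' : ℕ) (h : ¬ (x = m ∧ y = n))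
    (hy : hU (x - 1) = y') (hx : (if y' = n then m else eastTarget hL m x y') = x') :
    bounceAux hU hL m n (f + 1) x y j =
      (j + 1) * ((y' - y) + (x' - x)) + bounceAux hU hL m n f x' y' (j + 1) := by
  rw [bounceAux, if_neg h]
  simp only [hy, hx]

theorem bounceAux_done (hU hL : ℕ → ℕ) (m n f j : ℕ) :
    bounceAux hU hL m n f m n j = 0 := by
  cases f <;> simp [bounceAux]

theorem bounce_mkP {m r s p q : ℕ} (h : PPv m (r, s, p, q)) :
    bounce (mkP h) = PPb m (r, s, p, q) := by
  have h' := h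
  simp only [PPv] at h'
  have hU : ∀ i < m, colHeight (wd m 0 r s) i = _ := fun i hi =>
    colHeight_wd (by omega) (by omega) (by omega) hi
  have hL : ∀ i < m, colHeight (wd m p q m) i = _ := fun i hi =>
    colHeight_wd (by omega) (by omega) (by omega) hi
  have t1 : r ≠ 0 → eastTarget (colHeight (wd m p q m)) m 1 1 = p := by
    intro hr
    apply eastTarget_eq _ _ _ _ _ (by omega)
    intro i hi
    rw [hL i hi]
    split_ifs <;> omega
  have t2 : ∀ x, 1 ≤ x → x ≤ q → eastTarget (colHeight (wd m p q m)) m x 2 = q := by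
    intro x hx hxq
    apply eastTarget_eq _ _ _ _ _ (by omega)
    intro i hi
    rw [hL i hi]
    split_ifs <;> omega
  simp only [bounce, mkP, PPb]
  by_cases hr : r = 0
  · by_cases hs : s = 0
    · rw [bounceAux_succ _ _ _ _ _ _ _ _ 3 m (by omega)
        (by rw [hU _ (by omega)]; split_ifs <;> omega) (by simp), bounceAux_done]
      simp only [hr, hs, if_true]
      omega
    · rw [bounceAux_succ _ _ _ _ _ _ _ _ 2 q (by omega)
        (by rw [hU _ (by omega)]; split_ifs <;> omega)
        (by rw [if_neg (by omega), t2 1 (by omega) (by omega)]),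
        bounceAux_succ _ _ _ _ _ _ _ _ 3 m (by omega)
        (by rw [hU _ (by omega)]; split_ifs <;> omega) (by simp), bounceAux_done]
      simp only [hr, hs, if_true, if_false]
      omega
  · rw [bounceAux_succ _ _ _ _ _ _ _ _ 1 p (by omega)
        (by rw [hU _ (by omega)]; split_ifs <;> omega)
        (by rw [if_neg (by omega), t1 hr])]
    by_cases hs : s < p
    · rw [bounceAux_succ _ _ _ _ _ _ _ _ 3 m (by omega)
        (by rw [hU _ (by omega)]; split_ifs <;> omega) (by simp), bounceAux_done]
      simp only [hr, hs, if_true, if_false]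
      omega
    · rw [bounceAux_succ _ _ _ _ _ _ _ _ 2 q (by omega)
        (by rw [hU _ (by omega)]; split_ifs <;> omega)
        (by rw [if_neg (by omega), t2 p (by omega) (by omega)]),
        bounceAux_succ _ _ _ _ _ _ _ _ 3 m (by omega)
        (by rw [hU _ (by omega)]; split_ifs <;> omega) (by simp), bounceAux_done]
      simp only [hr, hs, if_false]
      omega

theorem card_pp (m u v : ℕ) (hm : 1 ≤ m) :
    Nat.card {x // PPv m x ∧ PPa x = u ∧ PPb m x = v} =
    Nat.card {P : Polyomino m 3 // area P = u ∧ bounce P = v} := by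
  refine Nat.card_eq_of_bijective (fun x => ⟨mkP (m := m) x.2.1,
    by rw [area_mkP]; exact x.2.2.1, by rw [bounce_mkP]; exact x.2.2.2⟩) ⟨?_, ?_⟩
  · rintro ⟨⟨r, s, p, q⟩, h, _⟩ ⟨⟨r', s', p', q'⟩, h', _⟩ e
    have e := congrArg Subtype.val e
    have eL := congrArg Polyomino.lower e
    have eU := congrArg Polyomino.upper e
    simp only [mkP] at eL eU
    simp only [PPv] at h h'
    have := wd_inj (by omega) (by omega) (by omega) (by omega) eL
    have := wd_inj (by omega) (by omega) (by omega) (by omega) eU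
    apply Subtype.ext
    simp only [Prod.mk.injEq]
    omega
  · rintro ⟨P, hP⟩
    obtain ⟨r, s, p, q, h, rfl⟩ := exists_mkP hm P
    rw [area_mkP, bounce_mkP] at hP
    exact ⟨⟨(r, s, p, q), h, hP⟩, rfl⟩



/-! ### Noncrossing partitions with two merges -/

theorem fmax_eq {β : Finset ℕ} {M : ℕ} (h : M ∈ β) (h' : ∀ x ∈ β, x ≤ M) : fmax β = M :=
  le_antisymm (Finset.sup_le h') (Finset.le_sup (f := id) h)

theorem fmin_eq {β : Finset ℕ} {M : ℕ} (h : M ∈ β) (h' : ∀ x ∈ β, M ≤ x) : fmin β = M := by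
  have hne : β.Nonempty := ⟨M, h⟩
  rw [fmin, dif_pos hne]
  exact le_antisymm (Finset.min'_le _ _ h) (Finset.le_min' _ _ _ h')

theorem fmax_mem {β : Finset ℕ} (h : β.Nonempty) : fmax β ∈ β := by
  have : fmax β = β.max' h := by
    rw [Finset.max'_eq_sup', fmax, ← Finset.sup'_eq_sup h]
  rw [this]
  exact Finset.max'_mem _ _

def full (n : ℕ) (N : Finset (Finset ℕ)) : Finset (Finset ℕ) :=
  N ∪ ((Finset.Icc 1 n).filter (fun i => ∀ β ∈ N, i ∉ β)).image (fun i => {i})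

theorem mem_full {n : ℕ} {N : Finset (Finset ℕ)} {β : Finset ℕ} :
    β ∈ full n N ↔ β ∈ N ∨ ∃ i, (1 ≤ i ∧ i ≤ n) ∧ (∀ γ ∈ N, i ∉ γ) ∧ β = {i} := by
  simp only [full, Finset.mem_union, Finset.mem_image, Finset.mem_filter, Finset.mem_Icc]
  refine or_congr Iff.rfl (exists_congr fun i => ?_)
  constructor
  · rintro ⟨⟨h1, h2⟩, h3⟩; exact ⟨h1, h2, h3.symm⟩
  · rintro ⟨h1, h2, h3⟩; exact ⟨⟨h1, h2⟩, h3.symm⟩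

theorem blocks_eq {n : ℕ} (P : SetPartition n) : P.blocks = full n (nsBlocks P.blocks) := by
  ext β
  rw [mem_full]
  simp only [nsBlocks, Finset.mem_filter]
  constructor
  · intro hβ
    by_cases hc : 2 ≤ β.card
    · exact Or.inl ⟨hβ, hc⟩
    · have hne : β.Nonempty := by
        rw [Finset.nonempty_iff_ne_empty]; rintro rfl; exact P.not_empty_mem hβ
      have : β.card = 1 := by have := hne.card_pos; omega
      obtain ⟨i, rfl⟩ := Finset.card_eq_one.1 this
      refine Or.inr ⟨i, ?_, ?_, rfl⟩
      · simpa using (P.cover i).2 ⟨_, hβ, by simp⟩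
      · rintro γ ⟨hγ, hc'⟩ hi
        have hne : ({i} : Finset ℕ) ≠ γ := by rintro rfl; simp at hc'
        exact Finset.disjoint_left.1 (P.disjoint _ hβ _ hγ hne) (by simp) hi
  · rintro (h | ⟨i, hi, h, rfl⟩)
    · exact h.1
    · obtain ⟨γ, hγ, hiγ⟩ := (P.cover i).1 (by simpa using hi)
      have : ¬ 2 ≤ γ.card := fun hc => h γ ⟨hγ, hc⟩ hiγ
      have hc : γ.card = 1 := by have := Finset.card_pos.2 ⟨i, hiγ⟩; omega
      obtain ⟨j, rfl⟩ := Finset.card_eq_one.1 hc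
      have : i = j := by simpa using hiγ
      subst this; exact hγ

theorem card_blocks {n : ℕ} (P : SetPartition n) :
    ∑ β ∈ nsBlocks P.blocks, (β.card - 1) + P.blocks.card = n := by
  have h1 : ∑ β ∈ P.blocks, β.card = n := by
    have := Finset.card_biUnion (s := P.blocks) (t := id)
      (fun β hβ γ hγ hne => P.disjoint β hβ γ hγ hne)
    simp only [id] at this
    rw [← this]
    have e : P.blocks.biUnion id = Finset.Icc 1 n := by
      ext i; rw [P.cover i]; simp
    rw [e]; simp
  have h2 : ∑ β ∈ P.blocks, β.card = ∑ β ∈ P.blocks, (β.card - 1) + P.blocks.card := by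
    rw [Finset.card_eq_sum_ones, ← Finset.sum_add_distrib]
    refine Finset.sum_congr rfl fun β hβ => ?_
    have : β.Nonempty := by
      rw [Finset.nonempty_iff_ne_empty]; rintro rfl; exact P.not_empty_mem hβ
    have := this.card_pos
    omega
  have h3 : ∑ β ∈ nsBlocks P.blocks, (β.card - 1) = ∑ β ∈ P.blocks, (β.card - 1) := by
    rw [nsBlocks]
    apply Finset.sum_subset (Finset.filter_subset _ _)
    intro β hβ h
    simp only [Finset.mem_filter, hβ, true_and] at h
    omega
  omega

def mkSP (n : ℕ) (N : Finset (Finset ℕ)) (h1 : ∀ β ∈ N, ∀ i ∈ β, 1 ≤ i ∧ i ≤ n)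
    (h2 : ∀ β ∈ N, 2 ≤ β.card) (h3 : ∀ β ∈ N, ∀ γ ∈ N, β ≠ γ → Disjoint β γ) :
    SetPartition n where
  blocks := full n N
  not_empty_mem := by
    rw [mem_full]
    rintro (h | ⟨i, _, _, h⟩)
    · have := h2 _ h; simp at this
    · exact absurd h.symm (by simp)
  cover := by
    intro i
    rw [Finset.mem_Icc]
    constructor
    · intro hi
      by_cases h : ∃ β ∈ N, i ∈ β
      · obtain ⟨β, hβ, hi⟩ := h
        exact ⟨β, mem_full.2 (Or.inl hβ), hi⟩
      · push Not at h
        exact ⟨{i}, mem_full.2 (Or.inr ⟨i, hi, h, rfl⟩), by simp⟩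
    · rintro ⟨β, hβ, hi⟩
      rcases mem_full.1 hβ with h | ⟨j, hj, _, rfl⟩
      · exact h1 β h i hi
      · simp at hi; subst hi; exact hj
  disjoint := by
    intro β hβ γ hγ hne
    rcases mem_full.1 hβ with h | ⟨j, hj, hj', rfl⟩ <;>
    rcases mem_full.1 hγ with h' | ⟨k, hk, hk', rfl⟩
    · exact h3 _ h _ h' hne
    · rw [Finset.disjoint_singleton_right]; exact hk' _ h
    · rw [Finset.disjoint_singleton_left]; exact hj' _ h'
    · simpa using hne

theorem ns_full {n : ℕ} {N : Finset (Finset ℕ)} (h2 : ∀ β ∈ N, 2 ≤ β.card) :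
    nsBlocks (full n N) = N := by
  ext β
  simp only [nsBlocks, Finset.mem_filter, mem_full]
  constructor
  · rintro ⟨h | ⟨i, _, _, rfl⟩, hc⟩
    · exact h
    · simp at hc
  · intro h; exact ⟨Or.inl h, h2 _ h⟩

theorem nonc_full {n : ℕ} {N : Finset (Finset ℕ)} (h : IsNoncrossing N) :
    IsNoncrossing (full n N) := by
  intro a b c d hab hbc hcd β hβ γ hγ ha hc hb hd
  rcases mem_full.1 hβ with hβ | ⟨j, _, _, rfl⟩
  · rcases mem_full.1 hγ with hγ | ⟨j, _, _, rfl⟩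
    · exact h a b c d hab hbc hcd β hβ γ hγ ha hc hb hd
    · simp at hb hd; omega
  · simp at ha hc; omega

/-- nonsingleton blocks attached to a quadruple -/
def nsq (x : ℕ × ℕ × ℕ × ℕ) : Finset (Finset ℕ) :=
  if x.2.1 = x.2.2.1 then {{x.1, x.2.1, x.2.2.2}} else {{x.1, x.2.1}, {x.2.2.1, x.2.2.2}}

theorem nsq_prop {n : ℕ} {x : ℕ × ℕ × ℕ × ℕ} (h : NCv n x) :
    (∀ β ∈ nsq x, ∀ i ∈ β, 1 ≤ i ∧ i ≤ n) ∧ (∀ β ∈ nsq x, 2 ≤ β.card) ∧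
    (∀ β ∈ nsq x, ∀ γ ∈ nsq x, β ≠ γ → Disjoint β γ) ∧ IsNoncrossing (nsq x) ∧
    ∑ β ∈ nsq x, (β.card - 1) = 2 := by
  obtain ⟨a, b, c, d⟩ := x
  simp only [NCv] at h
  simp only [nsq]
  split_ifs with hbc
  · have hc : ({a, b, d} : Finset ℕ).card = 3 := by
      rw [Finset.card_eq_three]
      exact ⟨a, b, d, by omega, by omega, by omega, rfl⟩
    refine ⟨?_, ?_, ?_, ?_, ?_⟩
    · simp only [Finset.mem_singleton, forall_eq, Finset.mem_insert]; omega
    · simp only [Finset.mem_singleton, forall_eq, hc]; omega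
    · simp
    · intro _ _ _ _ _ _ _ β hβ γ hγ _ _ _ _
      rw [Finset.mem_singleton.1 hβ, Finset.mem_singleton.1 hγ]
    · simp [hc]
  · have hne : ({a, b} : Finset ℕ) ≠ {c, d} := by
      intro e
      have : a ∈ ({c, d} : Finset ℕ) := by rw [← e]; simp
      simp only [Finset.mem_singleton, Finset.mem_insert] at this
      omega
    have c1 : ({a, b} : Finset ℕ).card = 2 := Finset.card_pair (by omega)
    have c2 : ({c, d} : Finset ℕ).card = 2 := Finset.card_pair (by omega)
    have hd : Disjoint ({a, b} : Finset ℕ) {c, d} := by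
      rw [Finset.disjoint_left]
      simp only [Finset.mem_singleton, Finset.mem_insert]
      omega
    refine ⟨?_, ?_, ?_, ?_, ?_⟩
    · simp only [Finset.mem_singleton, Finset.mem_insert, forall_eq_or_imp, forall_eq]; omega
    · simp only [Finset.mem_singleton, Finset.mem_insert, forall_eq_or_imp, forall_eq, c1, c2]
      omega
    · intro β hβ γ hγ hn
      simp only [Finset.mem_singleton, Finset.mem_insert] at hβ hγ
      rcases hβ with rfl | rfl <;> rcases hγ with rfl | rfl
      · exact absurd rfl hn
      · exact hd
      · exact hd.symm
      · exact absurd rfl hn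
    · intro p q r s h1 h2 h3 β hβ γ hγ
      simp only [Finset.mem_singleton, Finset.mem_insert] at hβ hγ
      rcases hβ with rfl | rfl <;> rcases hγ with rfl | rfl <;>
        simp only [Finset.mem_singleton, Finset.mem_insert] <;> intros
      · trivial
      · omega
      · omega
      · trivial
    · rw [Finset.sum_pair hne, c1, c2]

def mkNC {n : ℕ} (hn : 3 ≤ n) {x : ℕ × ℕ × ℕ × ℕ} (h : NCv n x) : NC n 3 :=
  ⟨mkSP n (nsq x) (nsq_prop h).1 (nsq_prop h).2.1 (nsq_prop h).2.2.1,
    nonc_full (nsq_prop h).2.2.2.1, by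
      have := card_blocks (mkSP n (nsq x) (nsq_prop h).1 (nsq_prop h).2.1 (nsq_prop h).2.2.1)
      have e : nsBlocks (mkSP n (nsq x) (nsq_prop h).1 (nsq_prop h).2.1 (nsq_prop h).2.2.1).blocks
        = nsq x := ns_full (nsq_prop h).2.1
      have s2 := (nsq_prop h).2.2.2.2
      rw [e] at this
      omega⟩

theorem blocks_mkNC {n : ℕ} (hn : 3 ≤ n) {x : ℕ × ℕ × ℕ × ℕ} (h : NCv n x) :
    (mkNC hn h).1.blocks = full n (nsq x) := rfl

theorem quad_nsq {n : ℕ} {x : ℕ × ℕ × ℕ × ℕ} (h : NCv n x) : blockQuad (full n (nsq x)) = x := by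
  have e : nsBlocks (full n (nsq x)) = nsq x := ns_full (nsq_prop h).2.1
  obtain ⟨a, b, c, d⟩ := x
  simp only [NCv] at h
  simp only [blockQuad, e]
  simp only [nsq]
  split_ifs with hbc h1 h1
  · have e1 : fmin (({{a, b, d}} : Finset (Finset ℕ)).sup id) = a := by
      rw [Finset.sup_singleton]
      apply fmin_eq
      · simp
      · simp only [id, Finset.mem_singleton, Finset.mem_insert]; omega
    have e2 : blockContaining {{a, b, d}} a = {a, b, d} := by
      simp [blockContaining, Finset.filter_singleton]
    have e3 : ({a, b, d} : Finset ℕ).sort (· ≤ ·) = [a, b, d] := by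
      rw [Finset.sort_insert _ (by simp; omega) (by simp; omega),
        Finset.sort_insert _ (by simp; omega) (by simp; omega), Finset.sort_singleton]
    rw [e1, e2, e3]
    simp [hbc]
  · simp at h1
  · have hne : ({a, b} : Finset ℕ) ≠ {c, d} := by
      intro e
      have : a ∈ ({c, d} : Finset ℕ) := by rw [← e]; simp
      simp only [Finset.mem_singleton, Finset.mem_insert] at this
      omega
    rw [Finset.card_pair hne] at h1
    omega
  · have hne : ({a, b} : Finset ℕ) ≠ {c, d} := by
      intro e
      have : a ∈ ({c, d} : Finset ℕ) := by rw [← e]; simp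
      simp only [Finset.mem_singleton, Finset.mem_insert] at this
      omega
    have e1 : fmin (({{a, b}, {c, d}} : Finset (Finset ℕ)).sup id) = a := by
      rw [Finset.sup_insert, Finset.sup_singleton]
      apply fmin_eq
      · simp
      · simp only [id, Finset.sup_eq_union, Finset.mem_union, Finset.mem_singleton,
          Finset.mem_insert]
        omega
    have e2 : blockContaining {{a, b}, {c, d}} a = {a, b} := by
      have n1 : a ∈ ({a, b} : Finset ℕ) := by simp
      have n2 : a ∉ ({c, d} : Finset ℕ) := by simp; omega
      rw [blockContaining, Finset.filter_insert, if_pos n1, Finset.filter_singleton, if_neg n2]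
      simp
    have e3 : (({{a, b}, {c, d}} : Finset (Finset ℕ)).erase {a, b}).sup id = {c, d} := by
      rw [Finset.erase_insert (by simpa using hne)]
      simp
    rw [e1, e2, e3]
    have f1 : fmin {a, b} = a := fmin_eq (by simp) (by simp; omega)
    have f2 : fmax {a, b} = b := fmax_eq (by simp) (by simp; omega)
    have f3 : fmin {c, d} = c := fmin_eq (by simp) (by simp; omega)
    have f4 : fmax {c, d} = d := fmax_eq (by simp) (by simp; omega)
    rw [f1, f2, f3, f4]

theorem skew_nsq {n : ℕ} {x : ℕ × ℕ × ℕ × ℕ} (h : NCv n x) : skew (full n (nsq x)) = NCs x := by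
  simp only [skew, quad_nsq h, NCs]

theorem cnt_lemma {n : ℕ} (P : SetPartition n) (NM : Finset ℕ)
    (H : ∀ k, (∃ β ∈ P.blocks, fmax β = k) ↔ (1 ≤ k ∧ k ≤ n) ∧ k ∉ NM) (i M : ℕ) (hM : M ≤ n) :
    (P.blocks.filter (fun β => i < fmax β ∧ fmax β < M)).card = (Finset.Ioo i M \ NM).card := by
  apply Finset.card_bij (fun β _ => fmax β)
  · intro β hβ
    simp only [Finset.mem_filter] at hβ
    have := (H (fmax β)).1 ⟨β, hβ.1, rfl⟩
    simp only [Finset.mem_sdiff, Finset.mem_Ioo]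
    exact ⟨hβ.2, this.2⟩
  · intro β hβ γ hγ e
    simp only [Finset.mem_filter] at hβ hγ
    by_contra hne
    have n1 : ∀ β ∈ P.blocks, β.Nonempty := by
      intro β hβ
      rw [Finset.nonempty_iff_ne_empty]; rintro rfl; exact P.not_empty_mem hβ
    refine Finset.disjoint_left.1 (P.disjoint _ hβ.1 _ hγ.1 hne) (fmax_mem (n1 _ hβ.1)) ?_
    rw [e]; exact fmax_mem (n1 _ hγ.1)
  · intro k hk
    simp only [Finset.mem_sdiff, Finset.mem_Ioo] at hk
    obtain ⟨β, hβ, rfl⟩ := (H k).2 ⟨by omega, hk.2⟩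
    exact ⟨β, by simp only [Finset.mem_filter]; exact ⟨hβ, hk.1⟩, rfl⟩

theorem ncArea_eq (bs : Finset (Finset ℕ)) :
    ncArea bs = ∑ γ ∈ nsBlocks bs, ∑ i ∈ γ,
      (bs.filter (fun β => i < fmax β ∧ fmax β < fmax γ)).card := by
  rw [ncArea, Finset.sum_comm]
  have : ∀ γ ∈ bs, ∑ β ∈ bs, (γ.filter (fun i => i < fmax β ∧ fmax β < fmax γ)).card =
      ∑ i ∈ γ, (bs.filter (fun β => i < fmax β ∧ fmax β < fmax γ)).card := by
    intro γ _
    simp only [Finset.card_filter]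
    rw [Finset.sum_comm]
  rw [Finset.sum_congr rfl this, nsBlocks]
  symm
  apply Finset.sum_subset (Finset.filter_subset _ _)
  intro γ hγ hc
  simp only [Finset.mem_filter, hγ, true_and] at hc
  apply Finset.sum_eq_zero
  intro i hi
  have h1 : γ.card = 1 := by have := Finset.card_pos.2 ⟨i, hi⟩; omega
  obtain ⟨j, rfl⟩ := Finset.card_eq_one.1 h1
  have : i = j := by simpa using hi
  subst this
  have : fmax {i} = i := fmax_eq (by simp) (by simp)
  rw [this, Finset.card_eq_zero, Finset.filter_eq_empty_iff]
  intro β _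
  omega

theorem card_Ioo_sdiff0 (i M x y : ℕ) (hx : x ≤ i ∨ M ≤ x) (hy : y ≤ i ∨ M ≤ y) :
    (Finset.Ioo i M \ {x, y}).card = M - i - 1 := by
  have : Finset.Ioo i M \ {x, y} = Finset.Ioo i M := by
    ext k; simp; omega
  rw [this, Nat.card_Ioo]

theorem card_Ioo_sdiff1 (i M x y : ℕ) (hx : x ≤ i ∨ M ≤ x) (hy : i < y ∧ y < M) :
    (Finset.Ioo i M \ {x, y}).card = M - i - 2 := by
  have : Finset.Ioo i M \ {x, y} = (Finset.Ioo i M).erase y := by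
    ext k; simp; omega
  rw [this, Finset.card_erase_of_mem (by simpa using hy), Nat.card_Ioo]
  omega

theorem area_nsq {n : ℕ} (hn : 3 ≤ n) {x : ℕ × ℕ × ℕ × ℕ} (h : NCv n x) :
    ncArea (full n (nsq x)) = NCa x := by
  have e : nsBlocks (full n (nsq x)) = nsq x := ns_full (nsq_prop h).2.1
  have cl := cnt_lemma (mkNC hn h).1
  rw [blocks_mkNC] at cl
  rw [ncArea_eq, e]
  obtain ⟨a, b, c, d⟩ := x
  simp only [NCv] at h
  simp only [NCa]
  by_cases hbc : b = c
  · subst hbc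
    have en : nsq (a, b, b, d) = {{a, b, d}} := by simp [nsq]
    have f1 : fmax {a, b, d} = d := fmax_eq (by simp) (by simp; omega)
    rw [en] at cl ⊢
    have cl := cl {a, b} (by
      intro k
      constructor
      · rintro ⟨β, hβ, rfl⟩
        rcases mem_full.1 hβ with hβ | ⟨j, hj, hj', rfl⟩
        · rw [Finset.mem_singleton.1 hβ, f1]; simp; omega
        · rw [fmax_eq (M := j) (by simp) (by simp)]
          have := hj' _ (Finset.mem_singleton_self _)
          simp at this ⊢; omega
      · rintro ⟨h1, h2⟩
        by_cases hk : k = d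
        · subst hk
          exact ⟨_, mem_full.2 (Or.inl (Finset.mem_singleton_self _)), f1⟩
        · refine ⟨{k}, mem_full.2 (Or.inr ⟨k, h1, ?_, rfl⟩), fmax_eq (by simp) (by simp)⟩
          simp at h2 ⊢; omega)
    rw [Finset.sum_singleton, f1, Finset.sum_insert (by simp; omega), Finset.sum_pair (by omega),
      cl _ _ (by omega), cl _ _ (by omega), cl _ _ (by omega),
      card_Ioo_sdiff1 _ _ _ _ (by omega) (by omega), card_Ioo_sdiff0 _ _ _ _ (by omega) (by omega),
      card_Ioo_sdiff0 _ _ _ _ (by omega) (by omega), if_neg (by omega), if_pos rfl]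
    omega
  · have en : nsq (a, b, c, d) = {{a, b}, {c, d}} := by simp [nsq, hbc]
    have f1 : fmax {a, b} = b := fmax_eq (by simp) (by simp; omega)
    have f2 : fmax {c, d} = d := fmax_eq (by simp) (by simp; omega)
    have hne : ({a, b} : Finset ℕ) ≠ {c, d} := by
      intro e
      have : a ∈ ({c, d} : Finset ℕ) := by rw [← e]; simp
      simp only [Finset.mem_singleton, Finset.mem_insert] at this
      omega
    rw [en] at cl ⊢
    have m1 : ({a, b} : Finset ℕ) ∈ ({{a, b}, {c, d}} : Finset (Finset ℕ)) := by simp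
    have m2 : ({c, d} : Finset ℕ) ∈ ({{a, b}, {c, d}} : Finset (Finset ℕ)) := by simp
    have cl := cl {a, c} (by
      intro k
      constructor
      · rintro ⟨β, hβ, rfl⟩
        rcases mem_full.1 hβ with hβ | ⟨j, hj, hj', rfl⟩
        · rcases Finset.mem_insert.1 hβ with rfl | hβ
          · rw [f1]; simp; omega
          · rw [Finset.mem_singleton.1 hβ, f2]; simp; omega
        · rw [fmax_eq (M := j) (by simp) (by simp)]
          have t1 := hj' _ m1
          have t2 := hj' _ m2
          simp at t1 t2 ⊢; omega
      · rintro ⟨h1, h2⟩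
        by_cases hk : k = d
        · subst hk
          exact ⟨_, mem_full.2 (Or.inl m2), f2⟩
        · by_cases hk : k = b
          · subst hk
            exact ⟨_, mem_full.2 (Or.inl m1), f1⟩
          · refine ⟨{k}, mem_full.2 (Or.inr ⟨k, h1, ?_, rfl⟩), fmax_eq (by simp) (by simp)⟩
            simp at h2 ⊢; omega)
    rw [Finset.sum_pair hne, f1, f2, Finset.sum_pair (by omega), Finset.sum_pair (by omega),
      cl _ _ (by omega), cl _ _ (by omega), cl _ _ (by omega), cl _ _ (by omega)]
    rw [card_Ioo_sdiff0 b b _ _ (by omega) (by omega), card_Ioo_sdiff0 d d _ _ (by omega) (by omega),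
      card_Ioo_sdiff0 c d _ _ (by omega) (by omega)]
    by_cases hlt : b < c
    · rw [card_Ioo_sdiff0 a b _ _ (by omega) (by omega), if_pos hlt]
      omega
    · rw [card_Ioo_sdiff1 a b _ _ (by omega) (by omega), if_neg hlt, if_neg hbc]
      omega

theorem pair_sort (β : Finset ℕ) (h : β.card = 2) : ∃ a b, a < b ∧ β = {a, b} := by
  obtain ⟨a, b, hne, rfl⟩ := Finset.card_eq_two.1 h
  rcases Nat.lt_or_gt_of_ne hne with h | h
  · exact ⟨a, b, h, rfl⟩
  · exact ⟨b, a, h, Finset.pair_comm _ _⟩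

theorem triple_sort (β : Finset ℕ) (h : β.card = 3) : ∃ a b c, a < b ∧ b < c ∧ β = {a, b, c} := by
  have hne : β.Nonempty := Finset.card_pos.1 (by omega)
  have hc : (β.erase (β.min' hne)).card = 2 := by
    rw [Finset.card_erase_of_mem (Finset.min'_mem _ _), h]
  obtain ⟨b, c, hbc, e⟩ := pair_sort _ hc
  refine ⟨β.min' hne, b, c, ?_, hbc, ?_⟩
  · have hb : b ∈ β.erase (β.min' hne) := by rw [e]; simp
    exact Finset.min'_lt_of_mem_erase_min' _ _ hb
  · rw [← e, Finset.insert_erase (Finset.min'_mem _ _)]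

theorem exists_mkNC {n : ℕ} (hn : 3 ≤ n) (P : NC n 3) : ∃ x, ∃ h : NCv n x, mkNC hn h = P := by
  obtain ⟨P, hnc, hcard⟩ := P
  suffices H : ∃ x, NCv n x ∧ nsBlocks P.blocks = nsq x by
    obtain ⟨x, h, e⟩ := H
    refine ⟨x, h, Subtype.ext ?_⟩
    have : (mkNC hn h).1.blocks = P.blocks := by rw [blocks_mkNC, ← e, ← blocks_eq]
    generalize (mkNC hn h).1 = Q at this
    cases P; cases Q; simp at this; subst this; rfl
  have hs := card_blocks P
  have hs2 : ∑ β ∈ nsBlocks P.blocks, (β.card - 1) = 2 := by omega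
  have hge : ∀ β ∈ nsBlocks P.blocks, 1 ≤ β.card - 1 := by
    intro β hβ
    have := (Finset.mem_filter.1 hβ).2
    omega
  have hle : (nsBlocks P.blocks).card ≤ 2 := by
    rw [← hs2, Finset.card_eq_sum_ones]
    exact Finset.sum_le_sum hge
  have hsub : ∀ β ∈ nsBlocks P.blocks, β ∈ P.blocks := fun β hβ => (Finset.mem_filter.1 hβ).1
  have hr : ∀ β ∈ nsBlocks P.blocks, ∀ i ∈ β, 1 ≤ i ∧ i ≤ n := by
    intro β hβ i hi
    simpa using (P.cover i).2 ⟨β, hsub β hβ, hi⟩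
  have hd : ∀ β ∈ nsBlocks P.blocks, ∀ γ ∈ nsBlocks P.blocks, β ≠ γ → Disjoint β γ :=
    fun β hβ γ hγ => P.disjoint β (hsub _ hβ) γ (hsub _ hγ)
  have hnc' : IsNoncrossing (nsBlocks P.blocks) :=
    fun a b c d h1 h2 h3 β hβ γ hγ => hnc a b c d h1 h2 h3 β (hsub _ hβ) γ (hsub _ hγ)
  generalize nsBlocks P.blocks = N at *
  clear hcard hnc hsub hs
  have hc : N.card = 0 ∨ N.card = 1 ∨ N.card = 2 := by omega
  rcases hc with hc | hc | hc
  · rw [Finset.card_eq_zero.1 hc] at hs2; simp at hs2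
  · obtain ⟨β, rfl⟩ := Finset.card_eq_one.1 hc
    rw [Finset.sum_singleton] at hs2
    obtain ⟨a, b, c, h1, h2, rfl⟩ := triple_sort β (by omega)
    refine ⟨(a, b, b, c), ?_, by simp [nsq]⟩
    have ha := hr _ (Finset.mem_singleton_self _) a (by simp)
    have hb := hr _ (Finset.mem_singleton_self _) b (by simp)
    have hc := hr _ (Finset.mem_singleton_self _) c (by simp)
    simp only [NCv]
    omega
  · obtain ⟨β, γ, hne, rfl⟩ := Finset.card_eq_two.1 hc
    rw [Finset.sum_pair hne] at hs2
    have g1 := hge β (by simp)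
    have g2 := hge γ (by simp)
    obtain ⟨a, b, hab, rfl⟩ := pair_sort β (by omega)
    obtain ⟨c, d, hcd, rfl⟩ := pair_sort γ (by omega)
    have ra := hr {a, b} (by simp) a (by simp)
    have rb := hr {a, b} (by simp) b (by simp)
    have rc := hr {c, d} (by simp) c (by simp)
    have rd := hr {c, d} (by simp) d (by simp)
    have dj := hd {a, b} (by simp) {c, d} (by simp) hne
    simp at dj
    have x1 : ¬ (a < c ∧ c < b ∧ b < d) := fun ⟨h1, h2, h3⟩ =>
      hne (hnc' a c b d h1 h2 h3 {a, b} (by simp) {c, d} (by simp) (by simp) (by simp)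
        (by simp) (by simp))
    have x2 : ¬ (c < a ∧ a < d ∧ d < b) := fun ⟨h1, h2, h3⟩ =>
      hne (hnc' c a d b h1 h2 h3 {c, d} (by simp) {a, b} (by simp) (by simp) (by simp)
        (by simp) (by simp)).symm
    rcases Nat.lt_or_ge a c with hac | hac
    · refine ⟨(a, b, c, d), ?_, ?_⟩
      · simp only [NCv]; omega
      · have : b ≠ c := by omega
        simp [nsq, this]
    · refine ⟨(c, d, a, b), ?_, ?_⟩
      · simp only [NCv]; omega
      · have : d ≠ a := by omega
        simp [nsq, this, Finset.pair_comm]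

theorem card_nc (n u v : ℕ) (hn : 3 ≤ n) :
    Nat.card {x // NCv n x ∧ NCs x = u ∧ NCa x = v} =
    Nat.card {π : NC n 3 // skew π.val.blocks = u ∧ ncArea π.val.blocks = v} := by
  refine Nat.card_eq_of_bijective (fun x => ⟨mkNC hn x.2.1, ?_, ?_⟩) ⟨?_, ?_⟩
  · rw [blocks_mkNC, skew_nsq x.2.1]; exact x.2.2.1
  · rw [blocks_mkNC, area_nsq hn x.2.1]; exact x.2.2.2
  · rintro ⟨x, h, _⟩ ⟨y, h', _⟩ e
    have e := congrArg (fun z => blockQuad z.1.1.blocks) e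
    simp only [blocks_mkNC, quad_nsq h, quad_nsq h'] at e
    exact Subtype.ext e
  · rintro ⟨P, hP⟩
    obtain ⟨x, h, rfl⟩ := exists_mkNC hn P
    rw [blocks_mkNC, skew_nsq h, area_nsq hn h] at hP
    exact ⟨⟨x, h, hP⟩, rfl⟩


/-- The pair (skew, area) is a combinatorial interpretation of `N_{n,3}(q,t)`:
for all `n ≥ 3` and `u v`, the number of `π ∈ NC(n,3)` with `skew π = u` and
`area π = v` equals the number of `P ∈ PP(n-2,3)` with `area P = u`, `bounce P = v`. -/
theorem skew_area_pair (n u v : ℕ) (hn : 3 ≤ n) :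
    Nat.card {π : NC n 3 // skew π.val.blocks = u ∧ ncArea π.val.blocks = v} =
    Nat.card {P : Polyomino (n - 2) 3 // area P = u ∧ bounce P = v} := by
  obtain ⟨m, rfl⟩ : ∃ m, n = m + 2 := ⟨n - 2, by omega⟩
  rw [← card_nc _ u v hn, card_nc_w, ← card_pp_w]
  exact card_pp m u v (by omega)

end QtN
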